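/- arXiv:1712.00145 — 4 statements merged into one kernel-verified Lean document; each statement's English description precedes it below -/
import Mathlib

section
/- For all N_S ≥ 0 and σ ≥ 0, the 4×4 matrix V_Φ(N_S) + V_τ(N_S, σ) has determinant equal to 16(σ(2N_S + 1) + 1)², and consequently 4/√(det(V_Φ(N_S) + V_τ(N_S, σ))) = 1/(σ + 2σN_S + 1). (By the Gaussian-state overlap formula, this value is the entanglement fidelity ⟨Φ(N_S)| τ(N_S,σ) |Φ(N_S)⟩ of the two-mode squeezed vacuum after one mode passes through an additive-noise channel of variance σ.) -/
/-- Wigner covariance matrix of the two-mode squeezed vacuum with mean photon number `N`. -/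
noncomputable def VPhi (N : ℝ) : Matrix (Fin 4) (Fin 4) ℝ :=
  !![2*N+1, 2*Real.sqrt (N*(N+1)), 0, 0;
     2*Real.sqrt (N*(N+1)), 2*N+1, 0, 0;
     0, 0, 2*N+1, -(2*Real.sqrt (N*(N+1)));
     0, 0, -(2*Real.sqrt (N*(N+1))), 2*N+1]

/-- Wigner covariance matrix of the two-mode squeezed vacuum with mean photon number `N`
after one mode passes through an additive-noise channel of variance `σ`. -/
noncomputable def VTau (N σ : ℝ) : Matrix (Fin 4) (Fin 4) ℝ :=
  !![2*N+1, 2*Real.sqrt (N*(N+1)), 0, 0;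
     2*Real.sqrt (N*(N+1)), 2*N+1+2*σ, 0, 0;
     0, 0, 2*N+1, -(2*Real.sqrt (N*(N+1)));
     0, 0, -(2*Real.sqrt (N*(N+1))), 2*N+1+2*σ]

/-- `det(V_Φ(N_S) + V_τ(N_S, σ)) = 16(σ(2N_S + 1) + 1)²`, and consequently the
Gaussian overlap `4/√(det(V_Φ(N_S) + V_τ(N_S,σ))) = 1/(σ + 2σN_S + 1)`. -/
theorem tmsv_additive_noise_overlap (N σ : ℝ) (hN : 0 ≤ N) (hσ : 0 ≤ σ) :
    (VPhi N + VTau N σ).det = 16 * (σ * (2*N + 1) + 1) ^ 2 ∧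
    4 / Real.sqrt ((VPhi N + VTau N σ).det) = 1 / (σ + 2*σ*N + 1) := by
  have hs : Real.sqrt (N*(N+1)) ^ 2 = N*(N+1) := Real.sq_sqrt (by positivity)
  have hdet : (VPhi N + VTau N σ).det = 16 * (σ * (2*N + 1) + 1) ^ 2 := by
    have h1 : (VPhi N + VTau N σ).det =
        ((4*N+2)*(4*N+2+2*σ) - 16 * Real.sqrt (N*(N+1)) ^ 2) ^ 2 := by
      unfold VPhi VTau
      generalize Real.sqrt (N*(N+1)) = s
      simp [Matrix.det_succ_row_zero, Fin.sum_univ_succ, Fin.succAbove]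
      ring
    rw [h1, hs]
    ring
  refine ⟨hdet, ?_⟩
  have hpos : 0 < σ + 2*σ*N + 1 := by positivity
  have h2 : 16 * (σ * (2*N + 1) + 1) ^ 2 = (4 * (σ + 2*σ*N + 1)) ^ 2 := by ring
  rw [hdet, h2, Real.sqrt_sq (by positivity)]
  field_simp
end

section
/- For all N₁, N₂ ≥ 0, the series ∑_{n=0}^∞ √(p_n(N₁) p_n(N₂)) converges and equals 1/(√((N₁+1)(N₂+1)) − √(N₁N₂)), where p_n(N) = Nⁿ/(N+1)^{n+1}. (Since thermal states are commuting diagonal density operators with these eigenvalues, the square of this quantity is the fidelity F(θ(N₁), θ(N₂)) of two bosonic thermal states of mean photon numbers N₁ and N₂.) -/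
/-- For `N₁, N₂ ≥ 0`, the series `∑ₙ √(pₙ(N₁) pₙ(N₂))` with
`pₙ(N) = Nⁿ/(N+1)^{n+1}` (geometric photon-number distribution of a thermal state)
converges to `1/(√((N₁+1)(N₂+1)) − √(N₁N₂))`; its square is the fidelity of the two
thermal states. -/
theorem thermal_state_fidelity_series (N₁ N₂ : ℝ) (h₁ : 0 ≤ N₁) (h₂ : 0 ≤ N₂) :
    HasSum
      (fun n : ℕ => Real.sqrt ((N₁ ^ n / (N₁ + 1) ^ (n + 1)) * (N₂ ^ n / (N₂ + 1) ^ (n + 1))))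
      (1 / (Real.sqrt ((N₁ + 1) * (N₂ + 1)) - Real.sqrt (N₁ * N₂))) := by
  have hlt : Real.sqrt (N₁ * N₂) < Real.sqrt ((N₁ + 1) * (N₂ + 1)) :=
    Real.sqrt_lt_sqrt (by positivity) (by nlinarith)
  have hb0 : 0 ≤ Real.sqrt (N₁ * N₂) := Real.sqrt_nonneg _
  have hb2 : Real.sqrt (N₁ * N₂) ^ 2 = N₁ * N₂ := Real.sq_sqrt (by positivity)
  have ha2 : Real.sqrt ((N₁ + 1) * (N₂ + 1)) ^ 2 = (N₁ + 1) * (N₂ + 1) :=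
    Real.sq_sqrt (by positivity)
  generalize Real.sqrt (N₁ * N₂) = b at *
  generalize Real.sqrt ((N₁ + 1) * (N₂ + 1)) = a at *
  have ha : 0 < a := lt_of_le_of_lt hb0 hlt
  have hg := (hasSum_geometric_of_lt_one (div_nonneg hb0 ha.le)
    ((div_lt_one ha).2 hlt)).mul_left (1 / a)
  have hab : a - b ≠ 0 := (sub_pos.2 hlt).ne'
  have hv : 1 / a * (1 - b / a)⁻¹ = 1 / (a - b) := by
    rw [one_sub_div ha.ne']
    field_simp
  rw [hv] at hg
  refine (congrArg (fun f => HasSum f (1 / (a - b))) (funext fun n => ?_)).mpr hg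
  have hsq : N₁ ^ n / (N₁ + 1) ^ (n + 1) * (N₂ ^ n / (N₂ + 1) ^ (n + 1))
      = (1 / a * (b / a) ^ n) ^ 2 := by
    have e : (1 / a * (b / a) ^ n) ^ 2 = (b ^ 2) ^ n / (a ^ 2) ^ (n + 1) := by
      rw [div_pow, ← pow_mul, ← pow_mul]
      field_simp
      ring
    rw [e, ha2, hb2, mul_pow, mul_pow, div_mul_div_comm]
  rw [hsq, Real.sqrt_sq (by positivity)]
end

section
/- For every transmissivity η ∈ (0,1) and thermal photon number N_B ≥ 0, the quantity e(N_B, η, σ) tends to 0 as σ → 0⁺. (Since e(N_B, η, σ) is a uniform upper bound, holding for all input states, on the sine distance between the thermal channel L_{η,N_B} and its teleportation simulation L_{η,N_B + ησ/(1−η)}, this establishes that the teleportation simulation of the thermal channel converges uniformly to the thermal channel in the limit of ideal squeezing and detection.) -/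
open Filter Topology

/-- The uniform bound `e(N_B, η, σ)` on the sine distance between the thermal channel
`L_{η,N_B}` and its teleportation simulation `L_{η,N_B'}`, where
`N_B' = N_B + ησ/(1−η)`: the sine distance between the thermal environment states
`θ(N_B)` and `θ(N_B')`. -/
noncomputable def eTherm (NB η σ : ℝ) : ℝ :=
  Real.sqrt (1 -
    (Real.sqrt ((NB + 1) * ((NB + η * σ / (1 - η)) + 1)) -
      Real.sqrt (NB * (NB + η * σ / (1 - η)))) ^ (-2 : ℤ))

/-- For every transmissivity `η ∈ (0,1)` and thermal photon number `N_B ≥ 0`,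
`e(N_B, η, σ) → 0` as `σ → 0⁺`: the teleportation simulation of the thermal channel
converges uniformly to the thermal channel. -/
theorem thermal_channel_uniform_convergence (η NB : ℝ)
    (hη : η ∈ Set.Ioo (0 : ℝ) 1) (hNB : 0 ≤ NB) :
    Tendsto (fun σ : ℝ => eTherm NB η σ) (𝓝[>] 0) (𝓝 0) := by
  have key : Tendsto (fun σ : ℝ => eTherm NB η σ) (𝓝 0) (𝓝 (eTherm NB η 0)) := by
    have hval : Real.sqrt ((NB + 1) * ((NB + η * 0 / (1 - η)) + 1)) -
        Real.sqrt (NB * (NB + η * 0 / (1 - η))) = 1 := by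
      rw [mul_zero, zero_div, add_zero, Real.sqrt_mul_self (by linarith),
        Real.sqrt_mul_self hNB]
      ring
    have hc : Continuous (fun σ : ℝ => Real.sqrt ((NB + 1) * ((NB + η * σ / (1 - η)) + 1)) -
        Real.sqrt (NB * (NB + η * σ / (1 - η)))) := by fun_prop
    have h2 := hc.continuousAt (x := 0)
    have h3 := h2.zpow₀ (-2 : ℤ) (Or.inl (by rw [hval]; exact one_ne_zero))
    exact (Real.continuous_sqrt.continuousAt.comp (continuousAt_const.sub h3) :)
  have h0 : eTherm NB η 0 = 0 := by
    unfold eTherm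
    rw [mul_zero, zero_div, add_zero, Real.sqrt_mul_self (by linarith),
      Real.sqrt_mul_self hNB]
    simp
  rw [h0] at key
  exact key.mono_left nhdsWithin_le_nhds
end

section
/- For every gain G > 1 and thermal photon number N_B ≥ 0, the quantity e_amp(N_B, G, σ) tends to 0 as σ → 0⁺. (Since e_amp(N_B, G, σ) is a uniform upper bound, holding for all input states, on the sine distance between the amplifier channel A_{G,N_B} and its teleportation simulation A_{G, N_B + Gσ/(G−1)}, this establishes that the teleportation simulation of the amplifier channel converges uniformly to the amplifier channel in the limit of ideal squeezing and detection.) -/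
open Filter Topology

/-- The uniform bound `e_amp(N_B, G, σ)` on the sine distance between the amplifier channel
`A_{G,N_B}` and its teleportation simulation `A_{G,N_B''}`, where
`N_B'' = N_B + Gσ/(G−1)`: the sine distance between the thermal environment states
`θ(N_B)` and `θ(N_B'')`. -/
noncomputable def eAmp (NB G σ : ℝ) : ℝ :=
  Real.sqrt (1 -
    (Real.sqrt ((NB + 1) * ((NB + G * σ / (G - 1)) + 1)) -
      Real.sqrt (NB * (NB + G * σ / (G - 1)))) ^ (-2 : ℤ))

/-- For every gain `G > 1` and thermal photon number `N_B ≥ 0`, `e_amp(N_B, G, σ) → 0` as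
`σ → 0⁺`: the teleportation simulation of the amplifier channel converges uniformly to
the amplifier channel. -/
theorem amplifier_channel_uniform_convergence (G NB : ℝ) (hG : 1 < G) (hNB : 0 ≤ NB) :
    Tendsto (fun σ : ℝ => eAmp NB G σ) (𝓝[>] 0) (𝓝 0) := by
  have h1 : (Real.sqrt ((NB + 1) * ((NB + G * 0 / (G - 1)) + 1)) -
      Real.sqrt (NB * (NB + G * 0 / (G - 1)))) = 1 := by
    have e1 : (NB + 1) * ((NB + G * 0 / (G - 1)) + 1) = (NB + 1) * (NB + 1) := by simp
    have e2 : NB * (NB + G * 0 / (G - 1)) = NB * NB := by simp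
    rw [e1, e2, Real.sqrt_mul_self (by linarith), Real.sqrt_mul_self hNB]
    ring
  have h0 : eAmp NB G 0 = 0 := by
    unfold eAmp
    rw [h1]
    simp
  have hc : ContinuousAt (fun σ : ℝ => eAmp NB G σ) 0 := by
    unfold eAmp
    refine ContinuousAt.sqrt (ContinuousAt.sub continuousAt_const
      (ContinuousAt.zpow₀ ?_ _ (Or.inl ?_)))
    · exact Continuous.continuousAt (by fun_prop)
    · rw [h1]
      exact one_ne_zero
  have h := hc.tendsto
  simp only [h0] at h
  exact h.mono_left nhdsWithin_le_nhds
end
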